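/- Let n be a positive natural number, U a real n × n matrix, and b : Fin n → ℝ. Define Φ : (Fin n → ℝ) → (Fin n → ℝ) by Φ(u)(i) = σ((U · u + b)(i)) · tanh(u(i)), where σ(x) = 1/(1 + exp(−x)). Set C = max_i (Σ_j |U_{ij}| + |b(i)|). Then for any initial state u₀ and the iterates u_t = Φ^[t](u₀), one has |u_{t}(i)| ≤ σ(C)^{t−1} · |u_1(i)| for all t ≥ 1 and all components i; since 0 < σ(C) < 1, the trajectory converges geometrically to zero. -/

import Mathlib

/-! On the unit ball of the sup norm the sigmoid argument has `i`-th coordinate at most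
`C i = ∑ j, |U i j| + |b i|`, and `|tanh x| ≤ |x|`, so one step of the system shrinks the `i`-th
coordinate by the factor `σ(C i) < 1`. As `σ < 1` and `|tanh| < 1`, a single step brings any initial
state into that ball. -/

open Filter Topology
open scoped Matrix

theorem norm_mulVec_apply_le {m n R : Type*} [Fintype n] [NonUnitalSeminormedRing R]
    (A : Matrix m n R) (v : n → R) (i : m) : ‖(A *ᵥ v) i‖ ≤ (∑ j, ‖A i j‖) * ‖v‖ :=
  calc
    ‖(A *ᵥ v) i‖ ≤ ∑ j, ‖A i j * v j‖ := norm_sum_le _ _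
    _ ≤ ∑ j, ‖A i j‖ * ‖v‖ := by
      gcongr with j
      exact norm_mul_le_of_le le_rfl (norm_le_pi_norm v j)
    _ = (∑ j, ‖A i j‖) * ‖v‖ := (Finset.sum_mul ..).symm

theorem hasDerivAt_tanh (x : ℝ) : HasDerivAt Real.tanh (1 / Real.cosh x ^ 2) x := by
  have quotient := (Real.hasDerivAt_sinh x).div (Real.hasDerivAt_cosh x) (Real.cosh_pos x).ne'
  have numerator : Real.cosh x * Real.cosh x - Real.sinh x * Real.sinh x = 1 := by
    linarith [Real.cosh_sq_sub_sinh_sq x]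
  rw [numerator] at quotient
  exact quotient.congr_of_eventuallyEq (.of_forall Real.tanh_eq_sinh_div_cosh)

theorem lipschitzWith_one_tanh : LipschitzWith 1 Real.tanh := by
  refine lipschitzWith_of_nnnorm_deriv_le
    (fun x => (hasDerivAt_tanh x).differentiableAt) fun x => ?_
  rw [(hasDerivAt_tanh x).deriv, ← NNReal.coe_le_coe, coe_nnnorm, NNReal.coe_one,
    Real.norm_of_nonneg (by positivity)]
  exact div_le_one_of_le₀ (one_le_pow₀ (Real.one_le_cosh x)) (by positivity)

theorem abs_tanh_le_abs (x : ℝ) : |Real.tanh x| ≤ |x| := by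
  simpa using lipschitzWith_one_tanh.norm_le_mul Real.tanh_zero x

/-- The map `u ↦ σ(U u + b) ⊙ tanh u`, whose iterates are the states of a one-layer CFN without
input data; the index type `ι` enumerates the units of the layer. -/
noncomputable def cfnMap {ι : Type*} [Fintype ι] (U : Matrix ι ι ℝ) (b u : ι → ℝ) : ι → ℝ :=
  fun i => Real.sigmoid ((U *ᵥ u + b) i) * Real.tanh (u i)

namespace cfnMap

variable {ι : Type*} [Fintype ι] {U : Matrix ι ι ℝ} {b u : ι → ℝ} {C : ℝ} {i : ι}

theorem abs_apply (U : Matrix ι ι ℝ) (b u : ι → ℝ) (i : ι) :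
    |cfnMap U b u i| = Real.sigmoid ((U *ᵥ u + b) i) * |Real.tanh (u i)| := by
  rw [cfnMap, abs_mul, abs_of_pos (Real.sigmoid_pos _)]

theorem norm_le_one (U : Matrix ι ι ℝ) (b u : ι → ℝ) : ‖cfnMap U b u‖ ≤ 1 := by
  refine (pi_norm_le_iff_of_nonneg zero_le_one).2 fun i => ?_
  rw [Real.norm_eq_abs, abs_apply]
  exact mul_le_one₀ (Real.sigmoid_le_one _) (abs_nonneg _) (Real.abs_tanh_lt_one _).le

theorem abs_apply_le (hu : ‖u‖ ≤ 1) (hC : ∑ j, |U i j| + |b i| ≤ C) :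
    |cfnMap U b u i| ≤ Real.sigmoid C * |u i| := by
  have mulVec_le : (U *ᵥ u) i ≤ ∑ j, |U i j| :=
    calc
      (U *ᵥ u) i ≤ (∑ j, |U i j|) * ‖u‖ := (le_abs_self _).trans (norm_mulVec_apply_le U u i)
      _ ≤ ∑ j, |U i j| := mul_le_of_le_one_right (by positivity) hu
  have argument_le : (U *ᵥ u + b) i ≤ C := (add_le_add mulVec_le (le_abs_self _)).trans hC
  rw [abs_apply]
  exact mul_le_mul (Real.sigmoid_le argument_le) (abs_tanh_le_abs _) (abs_nonneg _)
    (Real.sigmoid_nonneg _)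

theorem abs_iterate_succ_apply_le (hC : ∑ j, |U i j| + |b i| ≤ C) (u : ι → ℝ) (t : ℕ) :
    |(cfnMap U b)^[t + 1] u i| ≤ Real.sigmoid C ^ t * |cfnMap U b u i| := by
  refine le_geom (u := fun t => |(cfnMap U b)^[t + 1] u i|) (Real.sigmoid_nonneg C) t fun k _ => ?_
  have state_le_one : ‖(cfnMap U b)^[k + 1] u‖ ≤ 1 := by
    rw [Function.iterate_succ_apply']
    exact norm_le_one U b _
  rw [Function.iterate_succ_apply' _ (k + 1)]
  exact abs_apply_le state_le_one hC

theorem tendsto_iterate (U : Matrix ι ι ℝ) (b u : ι → ℝ) :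
    Tendsto (fun t => (cfnMap U b)^[t] u) atTop (𝓝 0) := by
  rw [← tendsto_add_atTop_iff_nat 1, tendsto_pi_nhds]
  intro i
  refine squeeze_zero_norm (abs_iterate_succ_apply_le le_rfl u) ?_
  simpa using (tendsto_pow_atTop_nhds_zero_of_lt_one (Real.sigmoid_nonneg _)
    (Real.sigmoid_lt_one (∑ j, |U i j| + |b i|))).mul_const |cfnMap U b u i|

end cfnMap

theorem cfn_geometric_convergence_general {ι : Type*} [Fintype ι] {U : Matrix ι ι ℝ} {b C : ι → ℝ}
    (hC : ∀ i, ∑ j, |U i j| + |b i| ≤ C i) (u₀ : ι → ℝ) :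
    (∀ t, 1 ≤ t → ∀ i,
        |(cfnMap U b)^[t] u₀ i| ≤ Real.sigmoid (C i) ^ (t - 1) * |(cfnMap U b)^[1] u₀ i|) ∧
      Tendsto (fun t => (cfnMap U b)^[t] u₀) atTop (𝓝 0) := by
  refine ⟨fun t ht i => ?_, cfnMap.tendsto_iterate U b u₀⟩
  obtain ⟨k, rfl⟩ := Nat.exists_eq_add_of_le' ht
  exact cfnMap.abs_iterate_succ_apply_le (hC i) u₀ k

/-- Quantitative version of Lemma 2 of the paper: with
`C = max_i (∑_j |U i j| + |b i|)`, the iterates of the CFN-induced system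
`Φ(u)(i) = σ((U·u + b)(i)) * tanh(u(i))` satisfy
`|u_t(i)| ≤ σ(C)^(t-1) * |u_1(i)|` for all `t ≥ 1`; since `0 < σ(C) < 1`,
the trajectory converges geometrically to zero. -/
theorem cfn_geometric_convergence (n : ℕ) (hn : 0 < n)
    (U : Matrix (Fin n) (Fin n) ℝ) (b : Fin n → ℝ)
    (Φ : (Fin n → ℝ) → (Fin n → ℝ))
    (hΦ : ∀ u i, Φ u i = (1 / (1 + Real.exp (-(U.mulVec u + b) i))) * Real.tanh (u i))
    (C : ℝ)
    (hC : C = Finset.univ.sup'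
      (Finset.univ_nonempty_iff.mpr (Fin.pos_iff_nonempty.mp hn))
      (fun i => (∑ j, |U i j|) + |b i|))
    (u₀ : Fin n → ℝ) :
    (∀ t, 1 ≤ t → ∀ i,
        |Φ^[t] u₀ i| ≤ (1 / (1 + Real.exp (-C))) ^ (t - 1) * |Φ^[1] u₀ i|) ∧
      0 < 1 / (1 + Real.exp (-C)) ∧ 1 / (1 + Real.exp (-C)) < 1 ∧
      Filter.Tendsto (fun t => Φ^[t] u₀) Filter.atTop (nhds 0) := by
  obtain rfl : Φ = cfnMap U b := by
    ext u i
    rw [hΦ, cfnMap, Real.sigmoid_def, one_div]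
  obtain ⟨bound, limit⟩ := cfn_geometric_convergence_general (C := fun _ => C)
    (fun i => hC ▸ Finset.le_sup' (fun i => ∑ j, |U i j| + |b i|) (Finset.mem_univ i)) u₀
  simp only [one_div, ← Real.sigmoid_def]
  exact ⟨bound, Real.sigmoid_pos C, Real.sigmoid_lt_one C, limit⟩
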